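/- Let d ≥ 2 be an integer and S > 0, and set δ = S/(4√d). Let i ∈ H_d, let x ∈ ℝ^d with ‖x − i‖₂ ≤ 4/3, and let t ∈ T_i. Then for every j ∈ H_d with ‖j − i‖₂ > 5, the shifted cone C^δ_{x,t} is disjoint from B(j, 4/3) × T_j; that is, there is no pair (y, s) with ‖y − j‖₂ ≤ 4/3, s ∈ T_j and ‖y − x‖₂ < δ·(s − t). -/

import Mathlib

/-!
The cone opens too slowly to reach a ball whose center is far from `i`. Put `D = ‖j - i‖₂ > 5`.
The triangle inequality gives `‖y - x‖₂ ≥ D - 8/3`. On the other hand, the definition of `T_i` and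
`T_j` and the triangle inequality for `‖·‖₁` give `S (s - t) ≤ ‖j - i‖₁ + 1`, and Cauchy–Schwarz
(`normOneR_le_sqrt_mul_normTwoR`) bounds this by `√d D + 1`; hence
`δ (s - t) ≤ D / 4 + 1 / (4 √d) ≤ D / 4 + 1 / 4`. Since `D - 8/3 > D / 4 + 1 / 4` as soon as
`D > 35/9`, no point of the ball can lie in the cone.
-/

open Finset

/-- ℓ1 norm of a vector of `ℝ^d`. -/
noncomputable def normOneR {d : ℕ} (x : Fin d → ℝ) : ℝ := ∑ m, |x m|

/-- Euclidean (ℓ2) norm of a vector of `ℝ^d`. -/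
noncomputable def normTwoR {d : ℕ} (x : Fin d → ℝ) : ℝ := Real.sqrt (∑ m, (x m) ^ 2)

/-- The canonical embedding of `ℤ^d` into `ℝ^d`. -/
def toR {d : ℕ} (x : Fin d → ℤ) : Fin d → ℝ := fun m => (x m : ℝ)

/-- `i ∈ H_d`: the last `d − 2` coordinates of `i ∈ ℤ^d` vanish. -/
def memH {d : ℕ} (i : Fin d → ℤ) : Prop := ∀ m : Fin d, 2 ≤ (m : ℕ) → i m = 0

/-- Membership in the time interval `T_i = [‖i‖₁/S, (‖i‖₁+1)/S]`. -/
def memT {d : ℕ} (S : ℝ) (i : Fin d → ℤ) (t : ℝ) : Prop :=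
  normOneR (toR i) / S ≤ t ∧ t ≤ (normOneR (toR i) + 1) / S

/-- Identification of `normTwoR` with Mathlib's Euclidean norm, from which the triangle inequality
is inherited. -/
lemma normTwoR_eq_norm {d : ℕ} (v : Fin d → ℝ) : normTwoR v = ‖WithLp.toLp 2 v‖ := by
  simp [normTwoR, EuclideanSpace.norm_eq]

lemma normTwoR_add_le {d : ℕ} (u v : Fin d → ℝ) :
    normTwoR (u + v) ≤ normTwoR u + normTwoR v := by
  simp only [normTwoR_eq_norm, WithLp.toLp_add]
  exact norm_add_le _ _

lemma normTwoR_sub_comm {d : ℕ} (u v : Fin d → ℝ) :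
    normTwoR (u - v) = normTwoR (v - u) := by
  simp only [normTwoR_eq_norm, WithLp.toLp_sub]
  exact norm_sub_rev _ _

lemma normOneR_le_add_sub {d : ℕ} (u v : Fin d → ℝ) :
    normOneR v ≤ normOneR u + normOneR (v - u) := by
  unfold normOneR
  rw [← Finset.sum_add_distrib]
  refine Finset.sum_le_sum fun m _ => ?_
  simpa using abs_add_le (u m) (v m - u m)

lemma normOneR_le_sqrt_mul_normTwoR {d : ℕ} (v : Fin d → ℝ) :
    normOneR v ≤ Real.sqrt d * normTwoR v := by
  unfold normOneR normTwoR
  rw [← Real.sqrt_mul (Nat.cast_nonneg d)]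
  apply Real.le_sqrt_of_sq_le
  simpa using sq_sum_le_card_mul_sum_sq (s := Finset.univ) (f := fun m => |v m|)

/-- for `d ≥ 2`, `S > 0`, `δ = S/(4√d)`, `i ∈ H_d`, `x ∈ ℝ^d` with
`‖x − i‖₂ ≤ 4/3` and `t ∈ T_i`, for every `j ∈ H_d` with `‖j − i‖₂ > 5` the shifted cone
`C^δ_{x,t}` is disjoint from `B(j, 4/3) × T_j`: there is no `(y, s)` with `‖y − j‖₂ ≤ 4/3`,
`s ∈ T_j` and `‖y − x‖₂ < δ(s − t)`. -/
theorem cone_disjoint_from_balls_continuous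
    (d : ℕ) (hd : 2 ≤ d) (S : ℝ) (hS : 0 < S)
    (δ : ℝ) (hδ : δ = S / (4 * Real.sqrt d))
    (i : Fin d → ℤ) (hi : memH i)
    (x : Fin d → ℝ) (hx : normTwoR (x - toR i) ≤ 4 / 3)
    (t : ℝ) (ht : memT S i t)
    (j : Fin d → ℤ) (hj : memH j) (hfar : 5 < normTwoR (toR j - toR i)) :
    ¬ ∃ (y : Fin d → ℝ) (s : ℝ),
        normTwoR (y - toR j) ≤ 4 / 3 ∧ memT S j s ∧ normTwoR (y - x) < δ * (s - t) := by
  rintro ⟨y, s, hy, hs, hyx⟩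
  have htri : normTwoR (toR j - toR i) ≤ 4 / 3 + normTwoR (y - x) + 4 / 3 := by
    have h1 := normTwoR_add_le (toR j - y) ((y - x) + (x - toR i))
    have h2 := normTwoR_add_le (y - x) (x - toR i)
    rw [normTwoR_sub_comm (toR j) y, sub_add_sub_cancel, sub_add_sub_cancel] at h1
    rw [sub_add_sub_cancel] at h2
    linarith
  have htime : S * (s - t) ≤ Real.sqrt d * normTwoR (toR j - toR i) + 1 := by
    have h1 := (div_le_iff₀ hS).1 ht.1
    have h2 := (le_div_iff₀ hS).1 hs.2
    have h3 := normOneR_le_add_sub (toR i) (toR j)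
    have h4 := normOneR_le_sqrt_mul_normTwoR (toR j - toR i)
    linarith
  have hd1 : 1 ≤ Real.sqrt d := by
    rw [Real.one_le_sqrt]
    exact_mod_cast (by omega : 1 ≤ d)
  have hcone : δ * (s - t) ≤ normTwoR (toR j - toR i) / 4 + 1 / 4 := by
    rw [hδ, div_mul_eq_mul_div, div_le_iff₀ (by positivity)]
    linarith
  linarith
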